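/- Let n ≥ 2, let Ω ⊂ ℝⁿ be an open bounded set contained in the closed ball of radius R centered at the origin, and let f₁, f₂ : ℝⁿ → ℝ be continuous, supported in the closure of Ω, with |f_j(x)| ≤ M for all x and j = 1,2. Then for every x ∈ ℝⁿ, |Kf₁(x) − Kf₂(x)| ≤ |X'X(f₁ − f₂)(x)| + (e^{2RM} − 1) · ( X'X|f₁ − f₂| )(x). -/

import Mathlib

open MeasureTheory Metric Real

/-- The `n`-dimensional Euclidean space. -/
abbrev Euc (n : ℕ) := EuclideanSpace ℝ (Fin n)

/-- The standard surface measure on the unit sphere `S^{n-1} ⊂ ℝⁿ`. -/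
noncomputable def sphereMeasure (n : ℕ) : Measure (sphere (0 : Euc n) 1) :=
  (volume : Measure (Euc n)).toSphere

/-- The surface measure `|S^{n-1}|` of the unit sphere in `ℝⁿ`. -/
noncomputable def sphereVol (n : ℕ) : ℝ := (sphereMeasure n Set.univ).toReal

/-- The X-ray transform `Xf(x,θ) = ∫_ℝ f(x+sθ) ds`. -/
noncomputable def Xray {n : ℕ} (f : Euc n → ℝ) (x θ : Euc n) : ℝ :=
  ∫ s : ℝ, f (x + s • θ)

/-- The normal operator `X'Xf(x) = ∫_{S^{n-1}} Xf(x,θ) dθ`. -/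
noncomputable def normalOp {n : ℕ} (f : Euc n → ℝ) (x : Euc n) : ℝ :=
  ∫ θ : sphere (0 : Euc n) 1, Xray f x (θ : Euc n) ∂(sphereMeasure n)

/-- The single pixel X-ray transform `Kf(x) = ∫_{S^{n-1}} e^{-Xf(x,θ)} dθ`. -/
noncomputable def singlePixel {n : ℕ} (f : Euc n → ℝ) (x : Euc n) : ℝ :=
  ∫ θ : sphere (0 : Euc n) 1, Real.exp (-(Xray f x (θ : Euc n))) ∂(sphereMeasure n)

/-- The Fourier transform `𝓕f(ξ) = ∫ e^{-i x·ξ} f(x) dx`. -/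
noncomputable def FT {n : ℕ} (f : Euc n → ℝ) (ξ : Euc n) : ℂ :=
  ∫ x : Euc n, Complex.exp (-(Complex.I * ((inner ℝ x ξ : ℝ) : ℂ))) * (f x : ℂ)

/-- The inverse Fourier transform `𝓕⁻¹g(x) = (2π)^{-n} ∫ e^{i x·ξ} g(ξ) dξ`. -/
noncomputable def invFT {n : ℕ} (g : Euc n → ℂ) (x : Euc n) : ℂ :=
  ((((2 * π) ^ n)⁻¹ : ℝ) : ℂ) * ∫ ξ : Euc n, Complex.exp (Complex.I * ((inner ℝ x ξ : ℝ) : ℂ)) * g ξ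

/-- The `L²(ℝⁿ)` norm `(∫ |f|²)^{1/2}`. -/
noncomputable def L2norm {n : ℕ} (f : Euc n → ℝ) : ℝ :=
  (∫ x : Euc n, f x ^ 2) ^ ((1 : ℝ) / 2)

/-- The `H¹(U)` norm `(∫_U |u|²)^{1/2} + (∫_U |∇u|²)^{1/2}`. -/
noncomputable def H1norm {n : ℕ} (U : Set (Euc n)) (u : Euc n → ℝ) : ℝ :=
  (∫ x in U, u x ^ 2) ^ ((1 : ℝ) / 2) + (∫ x in U, ‖fderiv ℝ u x‖ ^ 2) ^ ((1 : ℝ) / 2)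

/-- A line through `x` in a unit direction meets the ball of radius `R` in parameters lying in an
interval of length `2R`. -/
lemma mem_Icc_of_add_smul_mem_closedBall {n : ℕ} {R s : ℝ} {x θ : Euc n} (hR : 0 ≤ R)
    (hθ : ‖θ‖ = 1) (h : x + s • θ ∈ closedBall (0 : Euc n) R) :
    s ∈ Set.Icc (-inner ℝ x θ - R) (-inner ℝ x θ + R) := by
  rw [mem_closedBall_zero_iff] at h
  have hsq : ‖x + s • θ‖ ^ 2 ≤ R ^ 2 := by gcongr
  have hexp : ‖x + s • θ‖ ^ 2 = ‖x‖ ^ 2 + 2 * (s * inner ℝ x θ) + s ^ 2 := by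
    rw [norm_add_sq_real, inner_smul_right, norm_smul, hθ, mul_one, Real.norm_eq_abs, sq_abs]
  have hcs : (inner ℝ x θ) ^ 2 ≤ ‖x‖ ^ 2 := by
    have := abs_real_inner_le_norm x θ
    rw [hθ, mul_one] at this
    exact sq_le_sq' (neg_le_of_abs_le this) (le_of_abs_le this)
  have := abs_le_of_sq_le_sq' (show (s + inner ℝ x θ) ^ 2 ≤ R ^ 2 by nlinarith) hR
  constructor <;> linarith [this.1, this.2]

section LineIntegrals

variable {n : ℕ} {R C : ℝ} {f : Euc n → ℝ} {x θ : Euc n}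

lemma apply_add_smul_eq_zero (hR : 0 ≤ R) (hs : Function.support f ⊆ closedBall 0 R)
    (hθ : ‖θ‖ = 1) {s : ℝ} (h : s ∉ Set.Icc (-inner ℝ x θ - R) (-inner ℝ x θ + R)) :
    f (x + s • θ) = 0 := by
  by_contra hne
  exact h (mem_Icc_of_add_smul_mem_closedBall hR hθ (hs hne))

lemma integrable_line (hf : Continuous f) (hR : 0 ≤ R)
    (hs : Function.support f ⊆ closedBall 0 R) (hθ : ‖θ‖ = 1) :
    Integrable (fun s : ℝ => f (x + s • θ)) :=
  Continuous.integrable_of_hasCompactSupport (by fun_prop)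
    (HasCompactSupport.intro isCompact_Icc fun _ => apply_add_smul_eq_zero hR hs hθ)

lemma abs_Xray_le (hR : 0 ≤ R) (hs : Function.support f ⊆ closedBall 0 R)
    (hC : ∀ y, |f y| ≤ C) (hθ : ‖θ‖ = 1) : |Xray f x θ| ≤ 2 * R * C := by
  unfold Xray
  rw [← setIntegral_eq_integral_of_forall_compl_eq_zero
    (s := Set.Icc (-inner ℝ x θ - R) (-inner ℝ x θ + R))
    fun _ => apply_add_smul_eq_zero hR hs hθ]
  refine (norm_setIntegral_le_of_norm_le_const (C := C)
    (f := fun s : ℝ => f (x + s • θ)) measure_Icc_lt_top fun s _ => hC (x + s • θ)).trans_eq ?_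
  rw [Real.volume_real_Icc_of_le (by linarith)]
  ring

lemma stronglyMeasurable_Xray (hf : Continuous f) (x : Euc n) :
    StronglyMeasurable fun θ : sphere (0 : Euc n) 1 => Xray f x θ := by
  have hc : Continuous fun p : sphere (0 : Euc n) 1 × ℝ => f (x + p.2 • (p.1 : Euc n)) := by
    fun_prop
  exact hc.stronglyMeasurable.integral_prod_right'

instance isFiniteMeasure_sphereMeasure : IsFiniteMeasure (sphereMeasure n) := by
  unfold sphereMeasure
  infer_instance

lemma integrable_Xray (hf : Continuous f) (hR : 0 ≤ R)
    (hs : Function.support f ⊆ closedBall 0 R) (hC : ∀ y, |f y| ≤ C) (x : Euc n) :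
    Integrable (fun θ : sphere (0 : Euc n) 1 => Xray f x θ) (sphereMeasure n) :=
  .of_bound (stronglyMeasurable_Xray hf x).aestronglyMeasurable (2 * R * C) <|
    .of_forall fun θ => abs_Xray_le hR hs hC (norm_eq_of_mem_sphere θ)

lemma integrable_exp_neg_Xray (hf : Continuous f) (hR : 0 ≤ R)
    (hs : Function.support f ⊆ closedBall 0 R) (hC : ∀ y, |f y| ≤ C) (x : Euc n) :
    Integrable (fun θ : sphere (0 : Euc n) 1 => Real.exp (-Xray f x θ)) (sphereMeasure n) := by
  refine .of_bound (Real.continuous_exp.comp_stronglyMeasurable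
    (stronglyMeasurable_Xray hf x).neg).aestronglyMeasurable (Real.exp (2 * R * C)) <|
    .of_forall fun θ => ?_
  rw [Real.norm_eq_abs, Real.abs_exp]
  exact Real.exp_le_exp.2 (neg_le.1 (neg_le_of_abs_le
    (abs_Xray_le hR hs hC (norm_eq_of_mem_sphere θ))))

end LineIntegrals

lemma abs_exp_neg_sub_exp_neg_add_sub_le {a b L : ℝ} (ha : |a| ≤ L) (hb : |b| ≤ L) :
    |Real.exp (-a) - Real.exp (-b) + (a - b)| ≤ (Real.exp L - 1) * |a - b| := by
  have hderiv : ∀ t ∈ Set.Icc (-L) L, HasDerivWithinAt (fun t => Real.exp (-t) + t)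
      (-Real.exp (-t) + 1) (Set.Icc (-L) L) t := fun t _ => by
    have h := ((hasDerivAt_neg t).exp.add (hasDerivAt_id t)).hasDerivWithinAt (s := Set.Icc (-L) L)
    rw [mul_neg_one] at h
    exact h
  have hbound : ∀ t ∈ Set.Icc (-L) L, ‖-Real.exp (-t) + 1‖ ≤ Real.exp L - 1 := fun t ht => by
    have hupper : Real.exp (-t) ≤ Real.exp L := Real.exp_le_exp.2 (by linarith [ht.1])
    have hlower : Real.exp (-L) ≤ Real.exp (-t) := Real.exp_le_exp.2 (by linarith [ht.2])
    rw [Real.norm_eq_abs, abs_le]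
    constructor <;> linarith [Real.add_one_le_exp L, Real.add_one_le_exp (-L)]
  have h := (convex_Icc (-L) L).norm_image_sub_le_of_norm_hasDerivWithin_le hderiv hbound
    (abs_le.1 hb) (abs_le.1 ha)
  rw [Real.norm_eq_abs, Real.norm_eq_abs] at h
  convert h using 2
  ring

/-- For `n ≥ 2`, `Ω` open bounded contained in the closed ball of radius `R`, and
`f₁, f₂` continuous, supported in `closure Ω`, bounded by `M`, one has the pointwise bound
`|Kf₁(x) − Kf₂(x)| ≤ |X'X(f₁ − f₂)(x)| + (e^{2RM} − 1)(X'X|f₁ − f₂|)(x)`. -/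
theorem singlePixel_difference_pointwise (n : ℕ) (hn : 2 ≤ n) (R M : ℝ) (hR : 0 ≤ R)
    (Ω : Set (Euc n)) (hΩo : IsOpen Ω) (hΩb : Bornology.IsBounded Ω)
    (hΩR : Ω ⊆ Metric.closedBall 0 R)
    (f₁ f₂ : Euc n → ℝ) (hf₁ : Continuous f₁) (hf₂ : Continuous f₂)
    (hs₁ : Function.support f₁ ⊆ closure Ω) (hs₂ : Function.support f₂ ⊆ closure Ω)
    (hM₁ : ∀ x, |f₁ x| ≤ M) (hM₂ : ∀ x, |f₂ x| ≤ M) (x : Euc n) :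
    |singlePixel f₁ x - singlePixel f₂ x| ≤
      |normalOp (fun y => f₁ y - f₂ y) x| +
        (Real.exp (2 * R * M) - 1) * normalOp (fun y => |f₁ y - f₂ y|) x := by
  have hball : closure Ω ⊆ closedBall 0 R := closure_minimal hΩR isClosed_closedBall
  replace hs₁ := hs₁.trans hball
  replace hs₂ := hs₂.trans hball
  have hM : 0 ≤ M := (abs_nonneg _).trans (hM₁ 0)
  have hsub : ∀ θ : sphere (0 : Euc n) 1,
      Xray (fun y => f₁ y - f₂ y) x θ = Xray f₁ x θ - Xray f₂ x θ := fun θ =>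
    integral_sub (integrable_line hf₁ hR hs₁ (norm_eq_of_mem_sphere θ))
      (integrable_line hf₂ hR hs₂ (norm_eq_of_mem_sphere θ))
  have habs : ∀ θ : sphere (0 : Euc n) 1,
      |Xray f₁ x θ - Xray f₂ x θ| ≤ Xray (fun y => |f₁ y - f₂ y|) x θ := fun θ => by
    rw [← hsub]
    exact abs_integral_le_integral_abs
  have hsdiff : Function.support (fun y => |f₁ y - f₂ y|) ⊆ closedBall 0 R := fun y hy => by
    by_contra hmem
    have h₁ : f₁ y = 0 := Function.notMem_support.1 fun h => hmem (hs₁ h)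
    have h₂ : f₂ y = 0 := Function.notMem_support.1 fun h => hmem (hs₂ h)
    simp [h₁, h₂] at hy
  have hMdiff : ∀ y, |(|f₁ y - f₂ y|)| ≤ M + M := fun y => by
    rw [abs_abs]
    exact (abs_sub _ _).trans (add_le_add (hM₁ y) (hM₂ y))
  have hX₁ := integrable_Xray hf₁ hR hs₁ hM₁ x
  have hX₂ := integrable_Xray hf₂ hR hs₂ hM₂ x
  have hE₁ := integrable_exp_neg_Xray hf₁ hR hs₁ hM₁ x
  have hE₂ := integrable_exp_neg_Xray hf₂ hR hs₂ hM₂ x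
  have hXabs := integrable_Xray (f := fun y => |f₁ y - f₂ y|) (by fun_prop) hR hsdiff hMdiff x
  have hcoef : 0 ≤ Real.exp (2 * R * M) - 1 :=
    sub_nonneg.2 (Real.one_le_exp (by positivity))
  have hnormal : normalOp (fun y => f₁ y - f₂ y) x =
      ∫ θ : sphere (0 : Euc n) 1, (Xray f₁ x θ - Xray f₂ x θ) ∂(sphereMeasure n) := by
    simp only [normalOp, hsub]
  have hremainder : |singlePixel f₁ x - singlePixel f₂ x + normalOp (fun y => f₁ y - f₂ y) x| ≤
      (Real.exp (2 * R * M) - 1) * normalOp (fun y => |f₁ y - f₂ y|) x := by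
    rw [hnormal, singlePixel, singlePixel, normalOp, ← integral_sub hE₁ hE₂,
      ← integral_add, ← integral_const_mul]
    rotate_left
    · exact hE₁.sub hE₂
    · exact hX₁.sub hX₂
    rw [← Real.norm_eq_abs]
    refine norm_integral_le_of_norm_le (hXabs.const_mul _) (.of_forall fun θ => ?_)
    exact (abs_exp_neg_sub_exp_neg_add_sub_le
      (abs_Xray_le hR hs₁ hM₁ (norm_eq_of_mem_sphere θ))
      (abs_Xray_le hR hs₂ hM₂ (norm_eq_of_mem_sphere θ))).trans
      (mul_le_mul_of_nonneg_left (habs θ) hcoef)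
  have htri := abs_sub (singlePixel f₁ x - singlePixel f₂ x + normalOp (fun y => f₁ y - f₂ y) x)
    (normalOp (fun y => f₁ y - f₂ y) x)
  rw [add_sub_cancel_right] at htri
  linarith
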